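/- Assume each coefficient F_j lies in a linear subspace 𝒮_j = span(P^{(1,j)}, …, P^{(d_j,j)}) ⊆ ℂ^{n×n}, where the basis matrices P^{(i,j)} are orthonormal with respect to the Frobenius inner product. Then the structured backward error of the approximate eigenpairs (V, Λ) satisfies η_𝒮 ≤ σ_min(((G ⊙^T V^T) ⊗ I_n) P)^{−1} ‖R‖_F, where σ_min denotes the smallest nonzero singular value of the matrix ((G ⊙^T V^T) ⊗ I_n) P. -/

import Mathlib

open Matrix Kronecker BigOperators

noncomputable section

/-- Frobenius norm of a complex matrix. -/
def fnorm {ι κ : Type*} [Fintype ι] [Fintype κ] (A : Matrix ι κ ℂ) : ℝ :=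
  Real.sqrt (∑ i, ∑ j, ‖A i j‖ ^ 2)

/-- Euclidean norm of a complex vector. -/
def vnorm {ι : Type*} [Fintype ι] (v : ι → ℂ) : ℝ :=
  Real.sqrt (∑ i, ‖v i‖ ^ 2)

/-- The four Moore–Penrose conditions. -/
def IsMoorePenrose {ι κ : Type*} [Fintype ι] [Fintype κ]
    (A : Matrix ι κ ℂ) (B : Matrix κ ι ℂ) : Prop :=
  A * B * A = A ∧ B * A * B = B ∧ (A * B)ᴴ = A * B ∧ (B * A)ᴴ = B * A

open scoped Classical in
/-- The Moore–Penrose pseudoinverse (defined by choice; it always exists and is unique). -/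
noncomputable def pinv {ι κ : Type*} [Fintype ι] [Fintype κ] (A : Matrix ι κ ℂ) :
    Matrix κ ι ℂ :=
  if h : ∃ B, IsMoorePenrose A B then h.choose else 0

/-- `s` is a singular value of `A`: `s ≥ 0` and `s²` is an eigenvalue of `Aᴴ A`. -/
def IsSingularValue {ι κ : Type*} [Fintype ι] [Fintype κ] (A : Matrix ι κ ℂ) (s : ℝ) : Prop :=
  0 ≤ s ∧ ∃ w : κ → ℂ, w ≠ 0 ∧ (Aᴴ * A).mulVec w = ((s : ℂ) ^ 2) • w

/-- The smallest nonzero singular value of `A`, i.e. `σ_p̂(A)` where `p̂ = rank A`. -/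
noncomputable def sigmaMinPos {ι κ : Type*} [Fintype ι] [Fintype κ] (A : Matrix ι κ ℂ) : ℝ :=
  sInf {s : ℝ | IsSingularValue A s ∧ 0 < s}

/-- The smallest singular value of a square matrix `A`, the minimum of `‖A v‖₂` over
unit vectors `v`. -/
noncomputable def sigmaMinSq {n : ℕ} (A : Matrix (Fin n) (Fin n) ℂ) : ℝ :=
  sInf {x : ℝ | ∃ w : Fin n → ℂ, vnorm w = 1 ∧ x = vnorm (A.mulVec w)}

/-- The transposed Khatri–Rao product `G ⊙^T W` of `G : p × k` and `W : p × n`: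
the `p × kn` matrix whose `i`-th row is `[G i 1 • (row i of W), …, G i k • (row i of W)]`. -/
def krt {p k n : ℕ} (G : Matrix (Fin p) (Fin k) ℂ) (W : Matrix (Fin p) (Fin n) ℂ) :
    Matrix (Fin p) (Fin k × Fin n) ℂ :=
  Matrix.of fun i jl => G i jl.1 * W i jl.2

/-!
In the coordinates `y` of a structured perturbation, the equation for an exact eigenpair is linear:
vectorizing it turns `∑ j, (Fⱼ + δFⱼ) V fⱼ(Λ) = 0` into `M y = -vec R`, where
`M = ((G ⊙ᵀ Vᵀ) ⊗ Iₙ) P`. Since the basis matrices are orthonormal, `P` is an isometry, so the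
Frobenius norm of the perturbation is `‖y‖`. The structured backward error is therefore the norm of
the least-norm solution of a consistent linear system. That solution lies in `(ker M)ᗮ`, where the
spectral theorem for `Mᴴ M` gives `σ_min ‖y‖ ≤ ‖M y‖ = ‖R‖_F`.
-/

section LeastSquares

variable {𝕜 E F : Type*} [RCLike 𝕜] [NormedAddCommGroup E] [InnerProductSpace 𝕜 E]
  [NormedAddCommGroup F] [InnerProductSpace 𝕜 F]

lemma exists_mem_orthogonal_ker_forall_norm_le (T : E →ₗ[𝕜] F) [T.ker.HasOrthogonalProjection]
    (c : E) : ∃ y ∈ T.kerᗮ, T y = T c ∧ ∀ z, T z = T c → ‖y‖ ≤ ‖z‖ := by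
  refine ⟨T.kerᗮ.starProjection c, Submodule.starProjection_apply_mem _ _, ?_, fun z hz ↦ ?_⟩
  · have hker : T (T.ker.starProjection c) = 0 := Submodule.starProjection_apply_mem T.ker c
    rw [Submodule.starProjection_orthogonal_val, map_sub, hker, sub_zero]
  · have hzc : T.kerᗮ.starProjection (c - z) = 0 := by
      rw [Submodule.starProjection_apply_eq_zero_iff]
      exact T.ker.le_orthogonal_orthogonal (by simp [hz])
    rw [map_sub, sub_eq_zero] at hzc
    exact hzc ▸ Submodule.norm_starProjection_apply_le _ z

open Module.End

variable [FiniteDimensional 𝕜 E]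

lemma mul_norm_sq_le_re_inner_of_mem_orthogonal_ker {S : E →ₗ[𝕜] E} (hS : S.IsSymmetric) {c : ℝ}
    (hc : ∀ μ : ℝ, μ ≠ 0 → HasEigenvalue S (μ : 𝕜) → c ≤ μ) {x : E} (hx : x ∈ S.kerᗮ) :
    c * ‖x‖ ^ 2 ≤ RCLike.re (inner 𝕜 x (S x)) := by
  let b := hS.eigenvectorBasis rfl
  let μ := hS.eigenvalues rfl
  have hinner : RCLike.re (inner 𝕜 x (S x)) = ∑ i, μ i * ‖b.repr x i‖ ^ 2 := by
    rw [← b.repr.inner_map_map, PiLp.inner_apply, map_sum]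
    refine Finset.sum_congr rfl fun i _ ↦ ?_
    rw [hS.eigenvectorBasis_apply_self_apply, RCLike.inner_apply, mul_assoc, RCLike.mul_conj]
    norm_cast
  rw [hinner, ← b.repr.norm_map x, EuclideanSpace.norm_sq_eq, Finset.mul_sum]
  refine Finset.sum_le_sum fun i _ ↦ ?_
  by_cases hi : μ i = 0
  · have hSb : S (b i) = (μ i : 𝕜) • b i := hS.apply_eigenvectorBasis rfl i
    have hker : b i ∈ S.ker := by
      rw [LinearMap.mem_ker, hSb, hi, RCLike.ofReal_zero, zero_smul]
    have hrepr : b.repr x i = 0 := (b.repr_apply_apply x i).trans (hx _ hker)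
    simp [hrepr]
  · gcongr
    exact hc _ hi (hS.hasEigenvalue_eigenvalues rfl i)

variable [FiniteDimensional 𝕜 F]

lemma mul_norm_le_norm_map_of_mem_orthogonal_ker (T : E →ₗ[𝕜] F) {s : ℝ} (hs : 0 ≤ s)
    (hsT : ∀ t : ℝ, 0 < t → HasEigenvalue (T.adjoint ∘ₗ T) ((t : 𝕜) ^ 2) → s ≤ t)
    {x : E} (hx : x ∈ T.kerᗮ) : s * ‖x‖ ≤ ‖T x‖ := by
  have hT := T.isPositive_adjoint_comp_self
  have hsq : s ^ 2 * ‖x‖ ^ 2 ≤ RCLike.re (inner 𝕜 x ((T.adjoint ∘ₗ T) x)) := by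
    refine mul_norm_sq_le_re_inner_of_mem_orthogonal_ker hT.isSymmetric (fun μ hμ hev ↦ ?_)
      (by rwa [LinearMap.ker_adjoint_comp_self])
    have hμ₀ : 0 ≤ μ := eigenvalue_nonneg_of_nonneg hev hT.re_inner_nonneg_right
    have hsqrt : ((√μ : ℝ) : 𝕜) ^ 2 = (μ : 𝕜) := mod_cast Real.sq_sqrt hμ₀
    exact (Real.le_sqrt hs hμ₀).1 (hsT _ (Real.sqrt_pos.2 (hμ₀.lt_of_ne' hμ)) (hsqrt ▸ hev))
  rw [LinearMap.comp_apply, LinearMap.adjoint_inner_right, inner_self_eq_norm_sq, ← mul_pow] at hsq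
  exact le_of_sq_le_sq hsq (norm_nonneg _)

end LeastSquares

section SingularValues

variable {ι κ : Type*} [Fintype ι] [Fintype κ]

lemma vnorm_eq_norm_toLp (v : ι → ℂ) : vnorm v = ‖WithLp.toLp 2 v‖ :=
  (EuclideanSpace.norm_eq _).symm

lemma vnorm_neg (v : ι → ℂ) : vnorm (-v) = vnorm v := by
  simp [vnorm]

lemma vnorm_mulVec_of_conjTranspose_mul_self [DecidableEq κ] {U : Matrix ι κ ℂ} (hU : Uᴴ * U = 1)
    (v : κ → ℂ) : vnorm (U *ᵥ v) = vnorm v := by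
  have hinner : inner ℂ (WithLp.toLp 2 (U *ᵥ v)) (WithLp.toLp 2 (U *ᵥ v)) =
      inner ℂ (WithLp.toLp 2 v) (WithLp.toLp 2 v) := by
    rw [EuclideanSpace.inner_toLp_toLp, EuclideanSpace.inner_toLp_toLp, star_mulVec,
      dotProduct_comm, ← dotProduct_mulVec, mulVec_mulVec, hU, one_mulVec, dotProduct_comm]
  rw [vnorm_eq_norm_toLp, vnorm_eq_norm_toLp, @norm_eq_sqrt_re_inner ℂ, hinner,
    ← @norm_eq_sqrt_re_inner ℂ]

variable (A : Matrix ι κ ℂ)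

lemma isSingularValue_iff_hasEigenvalue [DecidableEq κ] {s : ℝ} :
    IsSingularValue A s ↔
      0 ≤ s ∧ Module.End.HasEigenvalue
        (A.toEuclideanLin.adjoint ∘ₗ A.toEuclideanLin) ((s : ℂ) ^ 2) := by
  classical
  rw [← toEuclideanLin_conjTranspose_eq_adjoint, ← toLpLin_mul_same]
  refine and_congr_right fun _ ↦ ⟨fun ⟨w, hw, hAw⟩ ↦ ?_, fun h ↦ ?_⟩
  · exact Module.End.hasEigenvalue_of_hasEigenvector (x := WithLp.toLp 2 w)
      ⟨Module.End.mem_eigenspace_iff.2 (congrArg (WithLp.toLp 2) hAw), by simpa using hw⟩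
  · obtain ⟨w, hw⟩ := h.exists_hasEigenvector
    exact ⟨w.ofLp, by simpa using hw.2, congrArg WithLp.ofLp hw.apply_eq_smul⟩

lemma finite_setOf_isSingularValue : {s | IsSingularValue A s}.Finite := by
  classical
  refine Set.Finite.of_finite_image (f := fun s : ℝ ↦ (s : ℂ) ^ 2)
    ((Module.End.finite_hasEigenvalue _).subset <| Set.image_subset_iff.2 fun s hs ↦
      ((isSingularValue_iff_hasEigenvalue A).1 hs).2) fun s hs t ht hst ↦ ?_
  have hsq : (s : ℂ) ^ 2 = (t : ℂ) ^ 2 := hst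
  exact (sq_eq_sq₀ hs.1 ht.1).1 (mod_cast hsq)

lemma exists_isSingularValue_pos {A : Matrix ι κ ℂ} (hA : A ≠ 0) :
    ∃ s, IsSingularValue A s ∧ 0 < s := by
  classical
  let T := A.toEuclideanLin
  have hrank : 0 < Module.finrank ℂ T.range := by
    rw [Module.finrank_pos_iff, Submodule.nontrivial_iff_ne_bot, Ne, LinearMap.range_eq_bot]
    simpa [T] using hA
  have hpos : 0 < T.singularValues 0 := T.singularValues_pos_iff_lt_finrank_range.2 hrank
  exact ⟨T.singularValues 0, (isSingularValue_iff_hasEigenvalue A).2 ⟨hpos.le,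
    T.hasEigenvalue_adjoint_comp_self_sq_singularValues (hrank.trans_le T.finrank_range_le)⟩, hpos⟩

lemma sigmaMinPos_nonneg : 0 ≤ sigmaMinPos A :=
  Real.sInf_nonneg fun _ hs ↦ hs.2.le

lemma sigmaMinPos_pos {A : Matrix ι κ ℂ} (hA : A ≠ 0) : 0 < sigmaMinPos A :=
  (Set.Nonempty.csInf_mem (exists_isSingularValue_pos hA)
    ((finite_setOf_isSingularValue A).subset fun _ hs ↦ hs.1)).2

lemma sigmaMinPos_le {A : Matrix ι κ ℂ} {s : ℝ} (hs : IsSingularValue A s) (hpos : 0 < s) :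
    sigmaMinPos A ≤ s :=
  csInf_le ⟨0, fun _ ht ↦ ht.2.le⟩ ⟨hs, hpos⟩

lemma norm_le_inv_sigmaMinPos_mul_norm_of_mem_orthogonal_ker [DecidableEq κ]
    {x : EuclideanSpace ℂ κ} (hx : x ∈ A.toEuclideanLin.kerᗮ) :
    ‖x‖ ≤ (sigmaMinPos A)⁻¹ * ‖A.toEuclideanLin x‖ := by
  classical
  rcases eq_or_ne A 0 with rfl | hA
  · -- Here `sigmaMinPos 0 = sInf ∅ = 0` and its inverse is the junk value `0`.
    have hx₀ : x = 0 := by simpa using hx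
    simp [hx₀]
  · rw [← div_eq_inv_mul, le_div_iff₀' (sigmaMinPos_pos hA)]
    exact mul_norm_le_norm_map_of_mem_orthogonal_ker _ (sigmaMinPos_nonneg A)
      (fun t ht hev ↦ sigmaMinPos_le ((isSingularValue_iff_hasEigenvalue A).2 ⟨ht.le, hev⟩) ht) hx

lemma exists_minimal_vnorm_le_inv_sigmaMinPos (c : κ → ℂ) :
    ∃ y, A *ᵥ y = A *ᵥ c ∧ (∀ z, A *ᵥ z = A *ᵥ c → vnorm y ≤ vnorm z) ∧
      vnorm y ≤ (sigmaMinPos A)⁻¹ * vnorm (A *ᵥ c) := by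
  classical
  obtain ⟨y, hy, hyc, hmin⟩ :=
    exists_mem_orthogonal_ker_forall_norm_le A.toEuclideanLin (WithLp.toLp 2 c)
  have hyc' : A *ᵥ y.ofLp = A *ᵥ c := congrArg WithLp.ofLp hyc
  simp only [vnorm_eq_norm_toLp]
  refine ⟨y.ofLp, hyc', fun z hz ↦ hmin _ (congrArg (WithLp.toLp 2) hz), ?_⟩
  rw [← hyc']
  exact norm_le_inv_sigmaMinPos_mul_norm_of_mem_orthogonal_ker A hy

end SingularValues

section Coefficients

variable {R k m n p : Type*}

/-- The block row `[F₁, …, Fₖ]` of the coefficients; its Frobenius norm is the size of a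
perturbation. -/
def blockRow (F : k → Matrix m n R) : Matrix m (k × n) R :=
  of fun i jl ↦ F jl.1 i jl.2

/-- The residual `R = ∑ j, Fⱼ V fⱼ(Λ)` of approximate eigenpairs. The scalar functions and the
approximate eigenvalues enter only through the values `G i j = fⱼ(λᵢ)`. -/
def residualMatrix [NonUnitalNonAssocSemiring R] [Fintype k] [Fintype n] [Fintype p] [DecidableEq p]
    (G : Matrix p k R) (V : Matrix n p R) (F : k → Matrix m n R) : Matrix m p R :=
  ∑ j, F j * V * diagonal fun i ↦ G i j

lemma residualMatrix_add [NonUnitalNonAssocSemiring R] [Fintype k] [Fintype n] [Fintype p]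
    [DecidableEq p] (G : Matrix p k R) (V : Matrix n p R) (F F' : k → Matrix m n R) :
    residualMatrix G V (F + F') = residualMatrix G V F + residualMatrix G V F' := by
  simp [residualMatrix, Matrix.add_mul, Finset.sum_add_distrib]

variable {α : k → Type*}

/-- The block diagonal matrix `P = blockdiag(P⁽¹⁾, …, P⁽ᵏ⁾)`, where the columns of `P⁽ʲ⁾` are the
vectorized basis matrices. The row index `((j, l), i)` stands for the entry `(i, l)` of block `j`,
as in `vec (blockRow F)`. -/
def structureMatrix [Zero R] [DecidableEq k] (P : ∀ j, α j → Matrix m n R) :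
    Matrix ((k × n) × m) (Σ j, α j) R :=
  of fun jli c ↦ if jli.1.1 = c.1 then P c.1 c.2 jli.2 jli.1.2 else 0

lemma conjTranspose_mul_self_structureMatrix [CommSemiring R] [StarRing R] [Fintype k]
    [DecidableEq k] [Fintype m] [Fintype n] [∀ j, DecidableEq (α j)] {P : ∀ j, α j → Matrix m n R}
    (hP : ∀ j a b, ∑ i, ∑ l, starRingEnd R (P j a i l) * P j b i l = if a = b then 1 else 0) :
    (structureMatrix P)ᴴ * structureMatrix P = 1 := by
  ext ⟨j, a⟩ ⟨j', b⟩
  have hentry : ((structureMatrix P)ᴴ * structureMatrix P) ⟨j, a⟩ ⟨j', b⟩ =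
      if j = j' then ∑ i, ∑ l, starRingEnd R (P j a i l) * P j' b i l else 0 := by
    simp only [structureMatrix, mul_apply, conjTranspose_apply, of_apply, Fintype.sum_prod_type]
    rw [Fintype.sum_eq_single j fun j₁ hj₁ ↦ by simp [hj₁], Finset.sum_comm]
    by_cases hj : j = j' <;> simp [hj, starRingEnd_apply]
  rw [hentry, one_apply]
  rcases eq_or_ne j j' with rfl | hj
  · simp [hP]
  · simp [hj]

variable [∀ j, Fintype (α j)]

/-- The structured coefficients with coordinate vector `y`, turning a perturbation constrained to
the spans of the `P j` into an unconstrained vector. -/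
def structuredCoeffs [NonUnitalNonAssocSemiring R] (P : ∀ j, α j → Matrix m n R)
    (y : (Σ j, α j) → R) : k → Matrix m n R :=
  fun j ↦ ∑ a, y ⟨j, a⟩ • P j a

lemma forall_mem_span_iff_exists_structuredCoeffs [CommSemiring R] (P : ∀ j, α j → Matrix m n R)
    (δ : k → Matrix m n R) :
    (∀ j, δ j ∈ Submodule.span R (Set.range (P j))) ↔ ∃ y, structuredCoeffs P y = δ := by
  simp only [Submodule.mem_span_range_iff_exists_fun]
  refine ⟨fun h ↦ ?_, ?_⟩
  · choose c hc using h
    exact ⟨fun ja ↦ c ja.1 ja.2, funext hc⟩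
  · rintro ⟨y, rfl⟩ j
    exact ⟨fun a ↦ y ⟨j, a⟩, rfl⟩

lemma structureMatrix_mulVec [CommSemiring R] [Fintype k] [DecidableEq k]
    (P : ∀ j, α j → Matrix m n R) (y : (Σ j, α j) → R) :
    structureMatrix P *ᵥ y = vec (blockRow (structuredCoeffs P y)) := by
  ext ⟨⟨j, l⟩, i⟩
  simp only [structureMatrix, mulVec, dotProduct, of_apply, ite_mul, zero_mul, vec, blockRow,
    structuredCoeffs, Matrix.sum_apply, Matrix.smul_apply, smul_eq_mul]
  rw [Fintype.sum_sigma, Fintype.sum_eq_single j fun j' hj' ↦ by simp [hj'.symm]]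
  simp [mul_comm]

end Coefficients

section Vectorization

lemma fnorm_eq_vnorm_vec {ι κ : Type*} [Fintype ι] [Fintype κ] (A : Matrix ι κ ℂ) :
    fnorm A = vnorm (vec A) := by
  simp only [fnorm, vnorm, vec, Fintype.sum_prod_type_right]

lemma fnorm_blockRow_structuredCoeffs {k m n : Type*} {α : k → Type*} [Fintype k]
    [Fintype m] [Fintype n] [∀ j, Fintype (α j)] [∀ j, DecidableEq (α j)]
    {P : ∀ j, α j → Matrix m n ℂ}
    (hP : ∀ j a b, ∑ i, ∑ l, starRingEnd ℂ (P j a i l) * P j b i l = if a = b then 1 else 0)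
    (y : (Σ j, α j) → ℂ) :
    fnorm (blockRow (structuredCoeffs P y)) = vnorm y := by
  classical
  rw [fnorm_eq_vnorm_vec, ← structureMatrix_mulVec,
    vnorm_mulVec_of_conjTranspose_mul_self (conjTranspose_mul_self_structureMatrix hP)]

variable {m : Type*} {k n p : ℕ}

lemma residualMatrix_eq_blockRow_mul (G : Matrix (Fin p) (Fin k) ℂ) (V : Matrix (Fin n) (Fin p) ℂ)
    (F : Fin k → Matrix m (Fin n) ℂ) :
    residualMatrix G V F = blockRow F * (krt G Vᵀ)ᵀ := by
  ext i q
  simp only [residualMatrix, Matrix.sum_apply, mul_diagonal]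
  simp only [blockRow, krt, mul_apply, Finset.sum_mul, transpose_apply, of_apply,
    Fintype.sum_prod_type]
  exact Finset.sum_congr rfl fun j _ ↦ Finset.sum_congr rfl fun l _ ↦ by ring

lemma krt_kronecker_one_mulVec_vec_blockRow [Fintype m] [DecidableEq m]
    (G : Matrix (Fin p) (Fin k) ℂ) (V : Matrix (Fin n) (Fin p) ℂ)
    (F : Fin k → Matrix m (Fin n) ℂ) :
    (krt G Vᵀ ⊗ₖ (1 : Matrix m m ℂ)) *ᵥ vec (blockRow F) = vec (residualMatrix G V F) := by
  rw [kronecker_mulVec_vec, Matrix.one_mul, residualMatrix_eq_blockRow_mul]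

end Vectorization

theorem structured_backward_error_upper_bound_general {n k p : ℕ} {m : Type*}
    [Fintype m] [DecidableEq m] {α : Fin k → Type*} [∀ j, Fintype (α j)] [∀ j, DecidableEq (α j)]
    (F : Fin k → Matrix m (Fin n) ℂ)
    (f : Fin k → ℂ → ℂ) (lam : Fin p → ℂ)
    (V : Matrix (Fin n) (Fin p) ℂ)
    (P : (j : Fin k) → α j → Matrix m (Fin n) ℂ)
    (hP : ∀ j a b, ∑ i, ∑ l, starRingEnd ℂ (P j a i l) * P j b i l = if a = b then 1 else 0)
    (hF : ∃ δF : Fin k → Matrix m (Fin n) ℂ,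
      (∀ j, δF j ∈ Submodule.span ℂ (Set.range (P j))) ∧
      (∑ j, (F j + δF j) * V * Matrix.diagonal fun i ↦ f j (lam i)) = 0)
    (G : Matrix (Fin p) (Fin k) ℂ) (hG : ∀ i j, G i j = f j (lam i))
    (R : Matrix m (Fin p) ℂ)
    (hR : R = ∑ j, F j * V * Matrix.diagonal fun i ↦ f j (lam i))
    (Pm : Matrix ((Fin k × Fin n) × m) (Σ j, α j) ℂ)
    (hPm : ∀ jl i c, Pm (jl, i) c = if jl.1 = c.1 then P c.1 c.2 i jl.2 else 0) :
    ∃ η, IsLeast {x : ℝ | ∃ δF : Fin k → Matrix m (Fin n) ℂ,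
        (∀ j, δF j ∈ Submodule.span ℂ (Set.range (P j))) ∧
        (∑ j, (F j + δF j) * V * Matrix.diagonal fun i ↦ f j (lam i)) = 0 ∧
        x = fnorm (Matrix.of fun (i : m) (jl : Fin k × Fin n) ↦ δF jl.1 i jl.2)} η ∧
      η ≤ (sigmaMinPos ((krt G Vᵀ ⊗ₖ (1 : Matrix m m ℂ)) * Pm))⁻¹ * fnorm R := by
  obtain rfl : G = of fun i j ↦ f j (lam i) := Matrix.ext hG
  obtain rfl : Pm = structureMatrix P := Matrix.ext fun _ _ ↦ hPm _ _ _
  set G : Matrix (Fin p) (Fin k) ℂ := of fun i j ↦ f j (lam i)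
  set M := (krt G Vᵀ ⊗ₖ (1 : Matrix m m ℂ)) * structureMatrix P
  change R = residualMatrix G V F at hR
  have hM (y) : residualMatrix G V (F + structuredCoeffs P y) = 0 ↔ M *ᵥ y = -vec R := by
    rw [← mulVec_mulVec, structureMatrix_mulVec, krt_kronecker_one_mulVec_vec_blockRow,
      residualMatrix_add, ← hR, ← vec_neg, vec_inj, eq_neg_iff_add_eq_zero, add_comm]
  obtain ⟨δ₀, hδ₀, hres⟩ := hF
  obtain ⟨c, rfl⟩ := (forall_mem_span_iff_exists_structuredCoeffs P δ₀).1 hδ₀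
  have hc : M *ᵥ c = -vec R := (hM c).1 hres
  obtain ⟨y, hy, hmin, hle⟩ := exists_minimal_vnorm_le_inv_sigmaMinPos M c
  rw [hc] at hy hmin hle
  refine ⟨vnorm y, ⟨⟨structuredCoeffs P y,
    (forall_mem_span_iff_exists_structuredCoeffs P _).2 ⟨y, rfl⟩, (hM y).2 hy,
    (fnorm_blockRow_structuredCoeffs hP y).symm⟩, ?_⟩, ?_⟩
  · rintro _ ⟨δ, hδ, hδres, rfl⟩
    obtain ⟨z, rfl⟩ := (forall_mem_span_iff_exists_structuredCoeffs P δ).1 hδ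
    exact (hmin z ((hM z).1 hδres)).trans_eq (fnorm_blockRow_structuredCoeffs hP z).symm
  · rwa [vnorm_neg, ← fnorm_eq_vnorm_vec] at hle

/-- Structured backward error bound for coefficients in linear subspaces `𝒮ⱼ` spanned by
Frobenius-orthonormal bases `P^(i,j)`:
`η_𝒮 ≤ σ_min(((G ⊙ᵀ Vᵀ) ⊗ Iₙ) P)⁻¹ ‖R‖_F`, where `σ_min` denotes the smallest nonzero
singular value. -/
theorem structured_backward_error_upper_bound (n k p : ℕ)
    (F : Fin k → Matrix (Fin n) (Fin n) ℂ)
    (f : Fin k → ℂ → ℂ) (lam : Fin p → ℂ)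
    (V : Matrix (Fin n) (Fin p) ℂ)
    (d : Fin k → ℕ)
    (P : (j : Fin k) → Fin (d j) → Matrix (Fin n) (Fin n) ℂ)
    (hP : ∀ j a b, ∑ m, ∑ l, (starRingEnd ℂ) (P j a m l) * P j b m l =
      if a = b then 1 else 0)
    (hF : ∀ j, F j ∈ Submodule.span ℂ (Set.range (P j)))
    (G : Matrix (Fin p) (Fin k) ℂ) (hG : ∀ i j, G i j = f j (lam i))
    (R : Matrix (Fin n) (Fin p) ℂ)
    (hR : R = ∑ j, F j * V * Matrix.diagonal fun i => f j (lam i))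
    (r : Fin p × Fin n → ℂ) (hr : ∀ i m, r (i, m) = R m i)
    (Pm : Matrix ((Fin k × Fin n) × Fin n) ((j : Fin k) × Fin (d j)) ℂ)
    (hPm : ∀ jl m c, Pm (jl, m) c = if jl.1 = c.1 then P c.1 c.2 m jl.2 else 0) :
    sInf {x : ℝ | ∃ δF : Fin k → Matrix (Fin n) (Fin n) ℂ,
        (∀ j, δF j ∈ Submodule.span ℂ (Set.range (P j))) ∧
        (∑ j, (F j + δF j) * V * Matrix.diagonal fun i => f j (lam i)) = 0 ∧
        x = fnorm (Matrix.of fun (m : Fin n) (jl : Fin k × Fin n) => δF jl.1 m jl.2)}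
      ≤ (sigmaMinPos ((krt G Vᵀ ⊗ₖ (1 : Matrix (Fin n) (Fin n) ℂ)) * Pm))⁻¹ * fnorm R := by
  obtain ⟨η, hη, hle⟩ := structured_backward_error_upper_bound_general F f lam V P hP
    ⟨fun j ↦ -F j, fun j ↦ neg_mem (hF j), by simp⟩ G hG R hR Pm hPm
  exact hη.csInf_eq.trans_le hle
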